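/- arXiv:1502.03065 — 7 statements merged into one kernel-verified Lean document; each statement's English description precedes it below -/
import Mathlib

section
/- Let A be a finite alphabet and let u, v ∈ A*. For every natural number ℓ, the ℓ-th convolution power of H in the incidence algebra I(A*) over ℚ satisfies H^ℓ(u,v) = ℓ! · binom(v,u) if |v| = |u| + ℓ, and H^ℓ(u,v) = 0 otherwise. (Here H^0 = δ, the identity of the incidence algebra, with δ(u,v) = 1 if u = v and 0 otherwise.) -/
/-- `subwordCount v u` is the number of occurrences of `u` as a (scattered) subword of `v`,
i.e. the number of strictly increasing maps `φ` from the positions of `u` to the positions of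
`v` matching the letters. -/
def subwordCount {A : Type*} [DecidableEq A] (v u : List A) : ℕ :=
  ((Finset.univ : Finset (Fin u.length → Fin v.length)).filter
    (fun φ => (∀ i j : Fin u.length, i < j → φ i < φ j) ∧
      ∀ i : Fin u.length, u.get i = v.get (φ i))).card

/-- The identity `δ` of the incidence algebra `I(A*)` over `ℚ`. -/
def deltaW {A : Type*} [DecidableEq A] (u v : List A) : ℚ := if u = v then 1 else 0

/-- Convolution in the incidence algebra `I(A*)` of words under the subword order:
`(FG)(u,v) = ∑_{u ≤ z ≤ v} F(u,z)·G(z,v)`.  The words `z` with `u ≤ z ≤ v` are exactly the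
sublists `z` of `v` with `subwordCount z u > 0`. -/
def convW {A : Type*} [DecidableEq A] (F G : List A → List A → ℚ) (u v : List A) : ℚ :=
  ∑ z ∈ v.sublists.toFinset.filter (fun z => 0 < subwordCount z u), F u z * G z v

/-- Convolution powers, with `F ^ 0 = δ`. -/
def convPowW {A : Type*} [DecidableEq A] (F : List A → List A → ℚ) :
    ℕ → List A → List A → ℚ
  | 0 => deltaW
  | ℓ + 1 => convW F (convPowW F ℓ)

/-- The element `H` of `I(A*)`: `H(u,v) = binom(v,u)` if `|v| = |u| + 1`, else `0`. -/
def HW {A : Type*} [DecidableEq A] (u v : List A) : ℚ :=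
  if v.length = u.length + 1 then (subwordCount v u : ℚ) else 0

/-!
For a fixed length `|u| + j`, the sum of `binom(z,u) · binom(v,z)` over the words `z` of that length
counts the pairs `S ⊆ T` of sets of positions in `v` such that `u` is read at `S` and
`|T| = |u| + j`, and each such `S` lies in `choose (|v| - |u|) j` sets `T`. The recursion
`binom(av,bu) = binom(v,bu) + [a = b] binom(v,u)` turns this count into an induction on `v` with
Pascal's rule at each step. For `j = 1` it says that convolving `H` with a multiple of `binom`
produces the factor `|v| - |u|`, which is `ℓ + 1` at the step from `H^ℓ` to `H^(ℓ+1)`.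
-/

section Occurrences

variable {A : Type*} {m n : ℕ}

/-- The occurrences of a word `u` of length `m` as a subword of a word `v` of length `n`. Words are
encoded as functions on `Fin`, so that the letters are read off by composition. -/
def occurrences (v : Fin n → A) (u : Fin m → A) : Set (Fin m → Fin n) :=
  {φ | StrictMono φ ∧ v ∘ φ = u}

theorem subwordCount_eq_ncard_occurrences [DecidableEq A] (v u : List A) :
    subwordCount v u = (occurrences v.get u.get).ncard := by
  rw [subwordCount, ← Set.ncard_coe_finset]
  congr 1
  ext φ
  simp [occurrences, StrictMono, funext_iff, eq_comm]

theorem strictMono_succ_comp_iff {φ : Fin m → Fin n} : StrictMono (Fin.succ ∘ φ) ↔ StrictMono φ :=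
  ⟨fun h _ _ hij => Fin.succ_lt_succ_iff.1 (h hij), Fin.strictMono_succ.comp⟩

theorem succ_comp_mem_occurrences_cons {a : A} {v : Fin n → A} {u : Fin m → A}
    {φ : Fin m → Fin n} :
    Fin.succ ∘ φ ∈ occurrences (Fin.cons a v) u ↔ φ ∈ occurrences v u :=
  and_congr strictMono_succ_comp_iff Iff.rfl

theorem cons_zero_succ_comp_mem_occurrences_cons_cons {a b : A} {v : Fin n → A} {u : Fin m → A}
    {φ : Fin m → Fin n} :
    Fin.cons 0 (Fin.succ ∘ φ) ∈ occurrences (Fin.cons a v) (Fin.cons b u) ↔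
      a = b ∧ φ ∈ occurrences v u := by
  have strictMono_iff :
      StrictMono (Fin.cons 0 (Fin.succ ∘ φ) : Fin (m + 1) → Fin (n + 1)) ↔ StrictMono φ := by
    rw [Fin.strictMono_cons, strictMono_succ_comp_iff]
    exact and_iff_right fun i => (φ i).succ_pos
  have letters_iff : (Fin.cons a v : Fin (n + 1) → A) ∘ Fin.cons 0 (Fin.succ ∘ φ) = Fin.cons b u ↔
      a = b ∧ v ∘ φ = u := by
    simp [funext_iff, Fin.forall_fin_succ]
  exact (and_congr strictMono_iff letters_iff).trans and_left_comm

theorem exists_eq_succ_comp_or_eq_cons_zero_of_strictMono {φ : Fin (m + 1) → Fin (n + 1)}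
    (hφ : StrictMono φ) :
    (∃ ψ : Fin (m + 1) → Fin n, φ = Fin.succ ∘ ψ) ∨
      ∃ ψ : Fin m → Fin n, φ = Fin.cons 0 (Fin.succ ∘ ψ) := by
  have tail_ne_zero (i : Fin m) : φ i.succ ≠ 0 := Fin.ne_zero_of_lt (hφ i.succ_pos)
  by_cases h0 : φ 0 = 0
  · choose ψ hψ using fun i => Fin.exists_succ_eq.2 (tail_ne_zero i)
    exact .inr ⟨ψ, funext (Fin.cases h0 fun i => (hψ i).symm)⟩
  · choose ψ hψ using fun i => Fin.exists_succ_eq.2 (Fin.cases h0 tail_ne_zero i : φ i ≠ 0)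
    exact .inl ⟨ψ, funext fun i => (hψ i).symm⟩

theorem occurrences_cons_cons (a b : A) (v : Fin n → A) (u : Fin m → A) :
    occurrences (Fin.cons a v : Fin (n + 1) → A) (Fin.cons b u : Fin (m + 1) → A) =
      (Fin.succ ∘ ·) '' occurrences v (Fin.cons b u) ∪
        (fun φ => Fin.cons 0 (Fin.succ ∘ φ)) '' {φ ∈ occurrences v u | a = b} := by
  ext φ
  constructor
  · intro hφ
    obtain ⟨ψ, rfl⟩ | ⟨ψ, rfl⟩ := exists_eq_succ_comp_or_eq_cons_zero_of_strictMono hφ.1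
    · exact .inl ⟨ψ, succ_comp_mem_occurrences_cons.1 hφ, rfl⟩
    · exact .inr ⟨ψ, (cons_zero_succ_comp_mem_occurrences_cons_cons.1 hφ).symm, rfl⟩
  · rintro (⟨ψ, hψ, rfl⟩ | ⟨ψ, hψ, rfl⟩)
    · exact succ_comp_mem_occurrences_cons.2 hψ
    · exact cons_zero_succ_comp_mem_occurrences_cons_cons.2 hψ.symm

theorem ncard_occurrences_cons_cons [DecidableEq A] (a b : A) (v : Fin n → A) (u : Fin m → A) :
    (occurrences (Fin.cons a v : Fin (n + 1) → A) (Fin.cons b u : Fin (m + 1) → A)).ncard =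
      (occurrences v (Fin.cons b u : Fin (m + 1) → A)).ncard +
        if a = b then (occurrences v u).ncard else 0 := by
  have succ_comp_injective (k : ℕ) :
      Function.Injective (Fin.succ ∘ · : (Fin k → Fin n) → Fin k → Fin (n + 1)) :=
    (Fin.succ_injective n).comp_left
  have cons_zero_injective : Function.Injective
      (fun φ => Fin.cons 0 (Fin.succ ∘ φ) : (Fin m → Fin n) → Fin (m + 1) → Fin (n + 1)) :=
    (Fin.cons_right_injective 0).comp (succ_comp_injective m)
  rw [occurrences_cons_cons, Set.ncard_union_eq,
    Set.ncard_image_of_injective _ (succ_comp_injective _),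
    Set.ncard_image_of_injective _ cons_zero_injective]
  · split_ifs with hab <;> simp [hab]
  · rw [Set.disjoint_left]
    rintro _ ⟨ψ, -, rfl⟩ ⟨χ, -, h⟩
    exact Fin.succ_ne_zero (ψ 0) (congrFun h 0).symm

end Occurrences

section SubwordCount

open List

variable {A : Type*} [DecidableEq A]

@[simp]
theorem subwordCount_nil_right (v : List A) : subwordCount v [] = 1 := by
  simp [subwordCount]

@[simp]
theorem subwordCount_nil_cons (b : A) (u : List A) : subwordCount [] (b :: u) = 0 := by
  simp [subwordCount]

theorem subwordCount_cons_cons (a b : A) (v u : List A) :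
    subwordCount (a :: v) (b :: u) =
      subwordCount v (b :: u) + if a = b then subwordCount v u else 0 := by
  have get_cons (c : A) (w : List A) : (c :: w).get = Fin.cons c w.get :=
    funext (Fin.cases rfl fun _ => rfl)
  simp only [subwordCount_eq_ncard_occurrences, get_cons]
  exact ncard_occurrences_cons_cons a b v.get u.get

theorem subwordCount_eq_count_sublistsLen (v u : List A) :
    subwordCount v u = (v.sublistsLen u.length).count u := by
  induction v generalizing u with
  | nil => cases u <;> simp
  | cons a v ih =>
    cases u with
    | nil => simp
    | cons b u =>
      have count_map_cons : ((v.sublistsLen u.length).map (cons a)).count (b :: u) =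
          if a = b then (v.sublistsLen u.length).count u else 0 := by
        split_ifs with hab
        · subst hab
          exact count_map_of_injective _ _ cons_injective _
        · exact count_eq_zero.2 (by simp [hab])
      rw [subwordCount_cons_cons, ih, ih, length_cons, sublistsLen_succ_cons, count_append,
        count_map_cons]

theorem subwordCount_eq_zero_of_length_lt {v u : List A} (h : v.length < u.length) :
    subwordCount v u = 0 := by
  rw [subwordCount_eq_count_sublistsLen, sublistsLen_of_length_lt h, count_nil]

theorem subwordCount_of_length_eq {v u : List A} (h : v.length = u.length) :
    subwordCount v u = if u = v then 1 else 0 := by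
  rw [subwordCount_eq_count_sublistsLen, ← h, sublistsLen_length, count_singleton]
  simp [eq_comm (a := u)]

/-- If `v` is shorter than `b :: u`, Pascal's rule fails because of the truncated subtraction, but
then the count vanishes. -/
theorem choose_succ_mul_subwordCount_cons (b : A) (v u : List A) (j : ℕ) :
    (v.length - u.length).choose (j + 1) * subwordCount v (b :: u) =
      (v.length - (b :: u).length).choose j * subwordCount v (b :: u) +
        (v.length - (b :: u).length).choose (j + 1) * subwordCount v (b :: u) := by
  obtain hlt | hle := lt_or_ge v.length (b :: u).length
  · simp [subwordCount_eq_zero_of_length_lt hlt]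
  · have hsub : v.length - u.length = v.length - (b :: u).length + 1 := by grind
    rw [hsub, Nat.choose_succ_succ, add_mul]

theorem sum_subwordCount_sublistsLen_cons_cons (a b : A) (v u : List A) (k : ℕ) :
    (((a :: v).sublistsLen (k + 1)).map (subwordCount · (b :: u))).sum =
      ((v.sublistsLen (k + 1)).map (subwordCount · (b :: u))).sum +
        (((v.sublistsLen k).map (subwordCount · (b :: u))).sum +
          if a = b then ((v.sublistsLen k).map (subwordCount · u)).sum else 0) := by
  simp only [sublistsLen_succ_cons, map_append, sum_append, map_map, Function.comp_def,
    subwordCount_cons_cons, sum_map_add]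
  split_ifs <;> simp

theorem sum_subwordCount_sublistsLen_of_lt (v : List A) {u : List A} {k : ℕ} (hk : k < u.length) :
    ((v.sublistsLen k).map (subwordCount · u)).sum = 0 := by
  refine sum_eq_zero fun x hx => ?_
  obtain ⟨z, hz, rfl⟩ := mem_map.1 hx
  exact subwordCount_eq_zero_of_length_lt (by rwa [length_of_sublistsLen hz])

theorem sum_subwordCount_sublistsLen (v u : List A) (j : ℕ) :
    ((v.sublistsLen (u.length + j)).map (subwordCount · u)).sum =
      (v.length - u.length).choose j * subwordCount v u := by
  induction v generalizing u j with
  | nil => cases u <;> cases j <;> simp [← add_assoc]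
  | cons a v ih =>
    cases u with
    | nil => simp
    | cons b u =>
      have length_shift (i : ℕ) : u.length + i + 1 = (b :: u).length + i := by grind
      have pascal : (v.length - (b :: u).length).choose j * subwordCount v (b :: u) +
          ((v.sublistsLen (u.length + j)).map (subwordCount · (b :: u))).sum =
            (v.length - u.length).choose j * subwordCount v (b :: u) := by
        cases j with
        | zero => simp [sum_subwordCount_sublistsLen_of_lt]
        | succ j =>
          rw [← add_assoc, length_shift, ih, choose_succ_mul_subwordCount_cons, add_comm]
      rw [← length_shift, sum_subwordCount_sublistsLen_cons_cons, length_shift, ih, ih,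
        ← add_assoc, pascal, subwordCount_cons_cons, mul_add, mul_ite, mul_zero]
      simp only [length_cons, Nat.add_sub_add_right]

theorem sum_toFinset_sublistsLen_mul_subwordCount {R : Type*} [NonAssocSemiring R] (v : List A)
    (k : ℕ) (f : List A → R) :
    ∑ z ∈ (v.sublistsLen k).toFinset, f z * subwordCount v z = ((v.sublistsLen k).map f).sum := by
  rw [Finset.sum_list_map_count]
  refine Finset.sum_congr rfl fun z hz => ?_
  have hzk : z.length = k := length_of_sublistsLen (mem_toFinset.1 hz)
  rw [subwordCount_eq_count_sublistsLen, hzk, nsmul_eq_mul']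
  -- The two counts differ in their `BEq` instances.
  congr!

theorem sum_subwordCount_mul_subwordCount (v u : List A) (j : ℕ) :
    ∑ z ∈ (v.sublistsLen (u.length + j)).toFinset, subwordCount z u * subwordCount v z =
      (v.length - u.length).choose j * subwordCount v u :=
  (sum_toFinset_sublistsLen_mul_subwordCount v _ (subwordCount · u)).trans
    (sum_subwordCount_sublistsLen v u j)

theorem convW_HW (G : List A → List A → ℚ) (u v : List A) :
    convW HW G u v =
      ∑ z ∈ (v.sublistsLen (u.length + 1)).toFinset, subwordCount z u * G z v := by
  rw [convW, Finset.sum_filter_of_ne]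
  · simp only [HW, ite_mul, zero_mul]
    rw [← Finset.sum_filter]
    exact Finset.sum_congr (by ext; simp) fun _ _ => rfl
  · intro z _ hz
    by_contra! hcount
    simp_all [HW]

theorem convW_HW_of_forall_eq_mul_subwordCount {G : List A → List A → ℚ} {u v : List A} {c : ℚ}
    (hG : ∀ z, z.length = u.length + 1 → G z v = c * subwordCount v z) :
    convW HW G u v = c * ((v.length - u.length : ℕ) * subwordCount v u) := by
  calc convW HW G u v
      = ∑ z ∈ (v.sublistsLen (u.length + 1)).toFinset,
          c * (subwordCount z u * subwordCount v z : ℕ) := by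
        rw [convW_HW]
        refine Finset.sum_congr rfl fun z hz => ?_
        rw [hG z (length_of_sublistsLen (mem_toFinset.1 hz)), Nat.cast_mul, mul_left_comm]
    _ = c * ((v.length - u.length : ℕ) * subwordCount v u) := by
        rw [← Finset.mul_sum, ← Nat.cast_sum, sum_subwordCount_mul_subwordCount,
          Nat.choose_one_right, Nat.cast_mul]

theorem convPow_HW_apply_general (u v : List A) (ℓ : ℕ) :
    convPowW HW ℓ u v =
      if v.length = u.length + ℓ then (Nat.factorial ℓ : ℚ) * subwordCount v u else 0 := by
  induction ℓ generalizing u v with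
  | zero =>
    split_ifs with h
    · simp [convPowW, deltaW, subwordCount_of_length_eq h]
    · exact if_neg fun huv => h (by rw [huv, add_zero])
  | succ ℓ ih =>
    rw [convPowW]
    split_ifs with h
    · have hsub : v.length - u.length = ℓ + 1 := by grind
      rw [convW_HW_of_forall_eq_mul_subwordCount (c := ℓ.factorial)
        fun z hz => by rw [ih, if_pos (by grind)], hsub, Nat.factorial_succ]
      push_cast
      ring
    · rw [convW_HW_of_forall_eq_mul_subwordCount (c := 0)
        fun z hz => by rw [ih, if_neg (by grind), zero_mul], zero_mul]

end SubwordCount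

/-- Lemma 1: `H^ℓ(u,v) = ℓ! · binom(v,u)` if `|v| = |u| + ℓ`, and `0` otherwise. -/
theorem convPow_HW_apply {A : Type*} [Fintype A] [DecidableEq A] (u v : List A) (ℓ : ℕ) :
    convPowW HW ℓ u v =
      if v.length = u.length + ℓ then (Nat.factorial ℓ : ℚ) * subwordCount v u else 0 :=
  convPow_HW_apply_general u v ℓ
end

section
/- Let S denote the set of all (finite) permutations, partially ordered by pattern containment. In the incidence algebra I(S) over ℚ, define P(σ,π) = binom(π,σ) (the number of occurrences of the pattern σ in π) and H(σ,π) = binom(π,σ) if |π| = |σ|+1, else 0. Then P = e^H entrywise; that is, for all permutations σ ≤ π, ∑_{ℓ=0}^{|π|−|σ|} (1/ℓ!) · H^ℓ(σ,π) = binom(π,σ), where H^0 = δ is the identity of the incidence algebra. -/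
/-- `patternCount π σ` is the number of occurrences of the pattern `σ` in the permutation `π`:
strictly increasing maps `φ` such that `π ∘ φ` is order-isomorphic to `σ`.  A permutation of
`{1,…,n}` is modelled as an element of `Σ n, Equiv.Perm (Fin n)`. -/
def patternCount (π σ : Σ n, Equiv.Perm (Fin n)) : ℕ :=
  ((Finset.univ : Finset (Fin σ.1 → Fin π.1)).filter
    (fun φ => (∀ i j : Fin σ.1, i < j → φ i < φ j) ∧
      ∀ i j : Fin σ.1, σ.2 i < σ.2 j ↔ π.2 (φ i) < π.2 (φ j))).card

/-- The identity `δ` of the incidence algebra `I(S)` over `ℚ`. -/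
def deltaP (σ π : Σ n, Equiv.Perm (Fin n)) : ℚ := if σ = π then 1 else 0

/-- Convolution in the incidence algebra `I(S)` of permutations under pattern containment:
`(FG)(σ,π) = ∑_{σ ≤ τ ≤ π} F(σ,τ)·G(τ,π)`.  The permutations `τ` with `σ ≤ τ ≤ π` are
exactly the `τ` of size at most `|π|` with `patternCount τ σ > 0` and `patternCount π τ > 0`. -/
def convP (F G : (Σ n, Equiv.Perm (Fin n)) → (Σ n, Equiv.Perm (Fin n)) → ℚ)
    (σ π : Σ n, Equiv.Perm (Fin n)) : ℚ :=
  ∑ τ ∈ ((Finset.range (π.1 + 1)).sigma fun m =>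
      (Finset.univ : Finset (Equiv.Perm (Fin m)))).filter
        (fun τ => 0 < patternCount τ σ ∧ 0 < patternCount π τ),
    F σ τ * G τ π

/-- Convolution powers, with `F ^ 0 = δ`. -/
def convPowP (F : (Σ n, Equiv.Perm (Fin n)) → (Σ n, Equiv.Perm (Fin n)) → ℚ) :
    ℕ → (Σ n, Equiv.Perm (Fin n)) → (Σ n, Equiv.Perm (Fin n)) → ℚ
  | 0 => deltaP
  | ℓ + 1 => convP F (convPowP F ℓ)

/-- The element `H` of `I(S)`: `H(σ,π) = binom(π,σ)` if `|π| = |σ| + 1`, else `0`. -/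
def HP (σ π : Σ n, Equiv.Perm (Fin n)) : ℚ :=
  if π.1 = σ.1 + 1 then (patternCount π σ : ℚ) else 0

/-- The element `P` of `I(S)`: `P(σ,π) = binom(π,σ)`. -/
def PP (σ π : Σ n, Equiv.Perm (Fin n)) : ℚ := patternCount π σ

/-!
An occurrence of a pattern in `π` is an index set along which the standardization of `π` is that
pattern. Hence `∑ τ ∈ S_m, binom(π,τ) binom(τ,σ)` counts pairs of nested index sets `s ⊆ t` of
sizes `k = |σ|` and `m`, with pattern `σ` along `s`; each `s` extends to a `t` in
`choose (|π| - k) (m - k)` ways. Taking `m = k + 1` and inducting gives `H^ℓ(σ,π) = ℓ! binom(π,σ)`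
if `|π| = |σ| + ℓ` and `0` otherwise, so exactly one term of the exponential series survives.
-/

section Standardization

variable {α : Type*} [LinearOrder α] {k m : ℕ}

/-- The standardization of a word `f` with distinct letters: the permutation order-isomorphic to
`f`. It is encoded as the inverse of the permutation that sorts `f`; words with repeated letters
are standardized by breaking ties from left to right. -/
def standardization (f : Fin m → α) : Equiv.Perm (Fin m) :=
  (Tuple.sort f)⁻¹

lemma standardization_lt_iff {f : Fin m → α} (hf : Function.Injective f) {i j : Fin m} :
    standardization f i < standardization f j ↔ f i < f j := by
  have hsort : StrictMono (f ∘ Tuple.sort f) :=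
    (Tuple.monotone_sort f).strictMono_of_injective (hf.comp (Tuple.sort f).injective)
  simpa [standardization] using
    (hsort.lt_iff_lt (a := standardization f i) (b := standardization f j)).symm

lemma standardization_eq_iff {f : Fin m → α} (hf : Function.Injective f)
    {τ : Equiv.Perm (Fin m)} :
    standardization f = τ ↔ ∀ i j, τ i < τ j ↔ f i < f j := by
  refine ⟨fun h i j ↦ h ▸ standardization_lt_iff hf, fun h ↦ ?_⟩
  have hmono : StrictMono ⇑(standardization f * τ⁻¹) := fun i j hij ↦ by
    simpa [standardization_lt_iff hf, ← h] using hij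
  exact mul_inv_eq_one.mp (DFunLike.coe_injective (le_antisymm hmono.le_id hmono.id_le))

lemma standardization_coe_perm (π : Equiv.Perm (Fin m)) : standardization π = π :=
  (standardization_eq_iff π.injective).2 fun _ _ ↦ Iff.rfl

lemma standardization_standardization_comp {f : Fin m → α} (hf : Function.Injective f)
    {g : Fin k → Fin m} (hg : Function.Injective g) :
    standardization (standardization f ∘ g) = standardization (f ∘ g) := by
  rw [standardization_eq_iff ((standardization f).injective.comp hg)]
  intro i j
  rw [standardization_lt_iff (hf.comp hg)]
  exact (standardization_lt_iff hf).symm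

end Standardization

section OrderEmbedding

open Finset

lemma exists_orderEmbedding_trans_eq_iff {α β γ : Type*} [PartialOrder α] [Preorder β] [Preorder γ]
    {χ : α ↪o γ} {ψ : β ↪o γ} :
    (∃ φ : α ↪o β, φ.trans ψ = χ) ↔ Set.range χ ⊆ Set.range ψ := by
  constructor
  · rintro ⟨φ, rfl⟩
    exact Set.range_comp_subset_range φ ψ
  · intro h
    choose φ hφ using fun i ↦ h (Set.mem_range_self i)
    exact ⟨.ofMapLEIff φ fun i j ↦ by rw [← ψ.le_iff_le, hφ, hφ, χ.le_iff_le], RelEmbedding.ext hφ⟩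

variable {α : Type*} [LinearOrder α] [Fintype α] {k m : ℕ}

lemma card_orderEmbedding_subset_range (s : Finset α) (hs : #s ≤ m) :
    #{ψ : Fin m ↪o α | s ⊆ univ.map ψ.toEmbedding} = (Fintype.card α - #s).choose (m - #s) := by
  rw [← card_univ, ← card_filter_powersetCard_subset _ _ _ (subset_univ s) hs]
  refine card_bij (fun ψ _ ↦ univ.map ψ.toEmbedding) ?_ ?_ ?_
  · intro ψ hψ
    simpa using hψ
  · intro ψ _ ψ' _ h
    refine DFunLike.coe_injective ((ψ.strictMono.range_inj ψ'.strictMono).1 ?_)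
    simpa using congrArg (fun t : Finset α ↦ (t : Set α)) h
  · intro t ht
    obtain ⟨htm, hst⟩ := mem_filter.1 ht
    have hmap := map_orderEmbOfFin_univ t (mem_powersetCard.1 htm).2
    exact ⟨t.orderEmbOfFin (mem_powersetCard.1 htm).2, by simpa [hmap] using hst, hmap⟩

lemma card_orderEmbedding_factorizations (χ : Fin k ↪o α) (hkm : k ≤ m) :
    #{p : (Fin m ↪o α) × (Fin k ↪o Fin m) | p.2.trans p.1 = χ} =
      (Fintype.card α - k).choose (m - k) := by
  have hfactor (ψ : Fin m ↪o α) :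
      (∃ φ : Fin k ↪o Fin m, φ.trans ψ = χ) ↔ univ.map χ.toEmbedding ⊆ univ.map ψ.toEmbedding := by
    rw [exists_orderEmbedding_trans_eq_iff, ← coe_subset]
    simp
  have hcard : #(univ.map χ.toEmbedding) = k := by simp
  have hcount := card_orderEmbedding_subset_range (m := m) (univ.map χ.toEmbedding) (by rwa [hcard])
  rw [hcard] at hcount
  rw [← hcount]
  refine card_bij (fun p _ ↦ p.1) ?_ ?_ ?_
  · simp only [mem_filter_univ]
    exact fun p hp ↦ (hfactor p.1).1 ⟨p.2, hp⟩
  · simp only [mem_filter_univ]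
    rintro ⟨ψ, φ⟩ h ⟨_, φ'⟩ h' rfl
    have : φ = φ' := RelEmbedding.ext fun i ↦ ψ.injective (DFunLike.congr_fun (h.trans h'.symm) i)
    rw [this]
  · simp only [mem_filter_univ]
    intro ψ hψ
    obtain ⟨φ, hφ⟩ := (hfactor ψ).2 hψ
    exact ⟨(ψ, φ), hφ, rfl⟩

lemma sum_card_filter_trans (p : (Fin k ↪o α) → Prop) [DecidablePred p] (hkm : k ≤ m) :
    ∑ ψ : Fin m ↪o α, #{φ : Fin k ↪o Fin m | p (φ.trans ψ)} =
      #{χ : Fin k ↪o α | p χ} * (Fintype.card α - k).choose (m - k) := by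
  calc ∑ ψ : Fin m ↪o α, #{φ : Fin k ↪o Fin m | p (φ.trans ψ)}
    _ = ∑ q : (Fin m ↪o α) × (Fin k ↪o Fin m), if p (q.2.trans q.1) then 1 else 0 := by
      simp only [card_filter, Fintype.sum_prod_type]
    _ = ∑ χ : Fin k ↪o α, ∑ q : (Fin m ↪o α) × (Fin k ↪o Fin m) with q.2.trans q.1 = χ,
          if p χ then 1 else 0 :=
      (sum_fiberwise' univ (fun q : (Fin m ↪o α) × (Fin k ↪o Fin m) ↦ q.2.trans q.1)
        fun χ ↦ if p χ then 1 else 0).symm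
    _ = #{χ : Fin k ↪o α | p χ} * (Fintype.card α - k).choose (m - k) := by
      simp only [sum_const, card_orderEmbedding_factorizations _ hkm, smul_eq_mul, card_filter,
        sum_mul, mul_comm ((Fintype.card α - k).choose (m - k))]

end OrderEmbedding

section PatternCount

open Finset

variable {k m n : ℕ}

lemma patternCount_eq_card_standardization_eq (σ : Equiv.Perm (Fin k)) (π : Equiv.Perm (Fin n)) :
    patternCount ⟨n, π⟩ ⟨k, σ⟩ = #{φ : Fin k ↪o Fin n | standardization (π ∘ φ) = σ} := by
  have hiff (φ : Fin k ↪o Fin n) := standardization_eq_iff (π.injective.comp φ.injective) (τ := σ)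
  symm
  refine card_bij (fun φ _ ↦ ⇑φ) ?_ (fun _ _ _ _ h ↦ DFunLike.coe_injective h) ?_
  · simp only [mem_filter_univ, hiff]
    exact fun φ hφ ↦ ⟨fun _ _ hij ↦ φ.strictMono hij, hφ⟩
  · simp only [mem_filter_univ, hiff]
    exact fun φ hφ ↦ ⟨.ofStrictMono φ fun _ _ hij ↦ hφ.1 _ _ hij, hφ.2, rfl⟩

lemma size_le_of_patternCount_pos {σ π : Σ n, Equiv.Perm (Fin n)} (h : 0 < patternCount π σ) :
    σ.1 ≤ π.1 := by
  rw [patternCount_eq_card_standardization_eq, card_pos] at h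
  obtain ⟨φ, -⟩ := h
  simpa using Fintype.card_le_of_injective φ φ.injective

lemma patternCount_of_same_size (σ π : Equiv.Perm (Fin n)) :
    patternCount ⟨n, π⟩ ⟨n, σ⟩ = if σ = π then 1 else 0 := by
  have hrefl (φ : Fin n ↪o Fin n) : ⇑φ = id :=
    le_antisymm φ.strictMono.le_id φ.strictMono.id_le
  have : Unique (Fin n ↪o Fin n) :=
    ⟨⟨RelEmbedding.refl _⟩, fun φ ↦ DFunLike.coe_injective (hrefl φ)⟩
  simp only [patternCount_eq_card_standardization_eq, hrefl, Function.comp_id,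
    standardization_coe_perm, card_filter, Fintype.sum_unique, eq_comm]

lemma sum_patternCount_mul_patternCount (σ : Equiv.Perm (Fin k)) (π : Equiv.Perm (Fin n))
    (hkm : k ≤ m) :
    ∑ τ : Equiv.Perm (Fin m), patternCount ⟨n, π⟩ ⟨m, τ⟩ * patternCount ⟨m, τ⟩ ⟨k, σ⟩ =
      patternCount ⟨n, π⟩ ⟨k, σ⟩ * (n - k).choose (m - k) := by
  simp only [patternCount_eq_card_standardization_eq]
  calc ∑ τ : Equiv.Perm (Fin m), #{ψ : Fin m ↪o Fin n | standardization (π ∘ ψ) = τ} *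
          #{φ : Fin k ↪o Fin m | standardization (τ ∘ φ) = σ}
    _ = ∑ ψ : Fin m ↪o Fin n,
          #{φ : Fin k ↪o Fin m | standardization (standardization (π ∘ ψ) ∘ φ) = σ} := by
      simp_rw [← smul_eq_mul, ← sum_const]
      exact sum_fiberwise' univ (fun ψ : Fin m ↪o Fin n ↦ standardization (π ∘ ψ))
        fun τ ↦ #{φ : Fin k ↪o Fin m | standardization (τ ∘ φ) = σ}
    _ = ∑ ψ : Fin m ↪o Fin n,
          #{φ : Fin k ↪o Fin m | standardization (π ∘ φ.trans ψ) = σ} := by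
      refine sum_congr rfl fun ψ _ ↦ congrArg card (filter_congr fun φ _ ↦ ?_)
      rw [standardization_standardization_comp (π.injective.comp ψ.injective) φ.injective]
      rfl
    _ = #{χ : Fin k ↪o Fin n | standardization (π ∘ χ) = σ} * (n - k).choose (m - k) := by
      simpa only [Fintype.card_fin] using
        sum_card_filter_trans (fun χ : Fin k ↪o Fin n ↦ standardization (π ∘ χ) = σ) hkm

end PatternCount

section IncidenceAlgebra

open Finset

lemma deltaP_eq_ite_patternCount (σ π : Σ n, Equiv.Perm (Fin n)) :
    deltaP σ π = if π.1 = σ.1 then (patternCount π σ : ℚ) else 0 := by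
  obtain ⟨k, σ⟩ := σ
  obtain ⟨n, π⟩ := π
  by_cases h : n = k
  · subst h
    simp [deltaP, patternCount_of_same_size]
  · have : (⟨k, σ⟩ : Σ n, Equiv.Perm (Fin n)) ≠ ⟨n, π⟩ := fun e ↦ h (congrArg Sigma.fst e).symm
    simp [deltaP, h, this]

lemma convP_HP_eq_sum {G : (Σ n, Equiv.Perm (Fin n)) → (Σ n, Equiv.Perm (Fin n)) → ℚ}
    {π : Σ n, Equiv.Perm (Fin n)} (hG : ∀ τ, patternCount π τ = 0 → G τ π = 0)
    (σ : Σ n, Equiv.Perm (Fin n)) :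
    convP HP G σ π =
      ∑ τ : Equiv.Perm (Fin (σ.1 + 1)), patternCount ⟨σ.1 + 1, τ⟩ σ * G ⟨σ.1 + 1, τ⟩ π := by
  have hcontained (τ : Σ n, Equiv.Perm (Fin n)) (h : HP σ τ * G τ π ≠ 0) :
      0 < patternCount τ σ ∧ 0 < patternCount π τ := by
    refine ⟨Nat.pos_of_ne_zero fun h0 ↦ h ?_, Nat.pos_of_ne_zero fun h0 ↦ h ?_⟩
    · simp [HP, h0]
    · simp [hG τ h0]
  rw [convP, sum_filter_of_ne fun τ _ ↦ hcontained τ, sum_sigma, sum_eq_single (σ.1 + 1)]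
  · simp [HP]
  · intro m _ hm
    simp [HP, hm]
  · intro hlarge
    refine sum_eq_zero fun τ _ ↦ by_contra fun h ↦ hlarge ?_
    have hle := size_le_of_patternCount_pos (hcontained ⟨_, τ⟩ h).2
    exact mem_range.2 (Nat.lt_succ_of_le hle)

lemma convPowP_HP_eq_ite (ℓ : ℕ) (σ π : Σ n, Equiv.Perm (Fin n)) :
    convPowP HP ℓ σ π = if π.1 = σ.1 + ℓ then (ℓ.factorial : ℚ) * patternCount π σ else 0 := by
  induction ℓ generalizing σ with
  | zero => simp [convPowP, deltaP_eq_ite_patternCount]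
  | succ ℓ ih =>
    rw [convPowP, convP_HP_eq_sum fun τ h ↦ by rw [ih, h]; simp]
    simp only [ih, add_assoc, add_comm 1 ℓ]
    split_ifs with hsize
    · have hcover := sum_patternCount_mul_patternCount σ.2 π.2 σ.1.le_succ
      rw [show π.1 - σ.1 = ℓ + 1 by omega, Nat.succ_eq_add_one, Nat.add_sub_cancel_left,
        Nat.choose_one_right] at hcover
      calc ∑ τ : Equiv.Perm (Fin (σ.1 + 1)),
            (patternCount ⟨σ.1 + 1, τ⟩ σ * (ℓ.factorial * patternCount π ⟨σ.1 + 1, τ⟩) : ℚ)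
        _ = ℓ.factorial * (∑ τ : Equiv.Perm (Fin (σ.1 + 1)),
              patternCount π ⟨σ.1 + 1, τ⟩ * patternCount ⟨σ.1 + 1, τ⟩ σ : ℕ) := by
          push_cast
          rw [mul_sum]
          exact sum_congr rfl fun τ _ ↦ by ring
        _ = (ℓ + 1).factorial * patternCount π σ := by
          rw [hcover, Nat.factorial_succ]
          push_cast
          ring
    · simp

end IncidenceAlgebra

/-- Theorem (`P = e^H` in `I(S)`): for all permutations `σ ≤ π`,
`∑_{ℓ=0}^{|π|−|σ|} (1/ℓ!) · H^ℓ(σ,π) = binom(π,σ)`. -/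
theorem P_eq_exp_HP (σ π : Σ n, Equiv.Perm (Fin n)) (h : 0 < patternCount π σ) :
    ∑ ℓ ∈ Finset.range (π.1 - σ.1 + 1),
        (1 / (Nat.factorial ℓ : ℚ)) * convPowP HP ℓ σ π = patternCount π σ := by
  have hle : σ.1 ≤ π.1 := size_le_of_patternCount_pos h
  rw [Finset.sum_eq_single_of_mem (π.1 - σ.1) (Finset.self_mem_range_succ _)]
  · have hfactorial : ((π.1 - σ.1).factorial : ℚ) ≠ 0 := by positivity
    rw [convPowP_HP_eq_ite, if_pos (by omega)]
    field_simp
  · intro ℓ _ hℓ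
    rw [convPowP_HP_eq_ite, if_neg (by omega), mul_zero]
end

section
/- Let A be a finite alphabet and let P be the element of the incidence algebra I(A*) over ℚ defined by P(u,v) = binom(v,u). For every natural number d and all words u ≤ v in A*, the d-th convolution power of P satisfies P^d(u,v) = d^{|v|−|u|} · binom(v,u) (with the convention 0^0 = 1, so that P^0 = δ). -/
/-- The element `P` of `I(A*)`: `P(u,v) = binom(v,u)`. -/
def PW {A : Type*} [DecidableEq A] (u v : List A) : ℚ := subwordCount v u

/-! For a scalar `x` let `P_x(u,v) = x ^ (|v| - |u|) * binom(v,u)`. This is the coefficient of the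
word `u` in the image of the word `v` under the substitution `b ↦ b + x` in noncommuting letters.
Such substitutions compose by adding their parameters, so `P_x * P_y = P_(x+y)` and `P_0 = δ`, and
`P = P_1` gives `P ^ d = P_d`. In coordinates, the substitution is a recursion on the first letter
of `v`, obtained by viewing `binom(v,u)` as the multiplicity of `u` among the sublists of `v`. -/

theorem sublist_finRange_iff {n : ℕ} {l : List (Fin n)} :
    l.Sublist (List.finRange n) ↔ l.SortedLT := by
  refine ⟨fun h => ((List.pairwise_lt_finRange n).sublist h).sortedLT, fun h => ?_⟩
  have hsub : l.Subperm (List.finRange n) :=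
    h.nodup.subperm fun i _ => List.mem_finRange i
  exact List.sublist_of_subperm_of_sortedLE hsub h.sortedLE (List.sortedLT_finRange n).sortedLE

theorem sum_map_sublists'_cons {A R : Type*} [CommSemiring R] (F : List A → R) (y : R) (b : A)
    (v : List A) :
    ((b :: v).sublists'.map fun z => F z * y ^ ((b :: v).length - z.length)).sum =
      y * (v.sublists'.map fun z => F z * y ^ (v.length - z.length)).sum +
        (v.sublists'.map fun z => F (b :: z) * y ^ (v.length - z.length)).sum := by
  have drop : ∀ z ∈ v.sublists',
      F z * y ^ ((b :: v).length - z.length) = y * (F z * y ^ (v.length - z.length)) := by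
    intro z hz
    have hlen : z.length ≤ v.length := (List.mem_sublists'.1 hz).length_le
    rw [List.length_cons, Nat.sub_add_comm hlen, pow_succ]
    ring
  rw [List.sublists'_cons, List.map_append, List.sum_append, List.map_congr_left drop,
    List.sum_map_mul_left, List.map_map]
  simp only [Function.comp_def, List.length_cons, Nat.add_sub_add_right]

section

variable {A : Type*} [DecidableEq A]

theorem count_map_cons [BEq (List A)] [LawfulBEq (List A)] (L : List (List A)) (b : A)
    (u : List A) :
    (L.map (List.cons b)).count u = if u.head? = some b then L.count u.tail else 0 := by
  split_ifs with h
  · obtain ⟨u, rfl⟩ := List.head?_eq_some_iff.1 h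
    exact List.count_map_of_injective L _ List.cons_injective u
  · refine List.count_eq_zero_of_not_mem fun hu => h ?_
    obtain ⟨z, -, rfl⟩ := List.mem_map.1 hu
    rfl

theorem count_sublists'_eq_card_filter [BEq (List A)] [LawfulBEq (List A)] (v u : List A) :
    v.sublists'.count u =
      ((List.finRange v.length).sublists'.toFinset.filter fun l => l.map v.get = u).card := by
  have hnodup : (List.finRange v.length).sublists'.Nodup :=
    List.nodup_sublists'.2 (List.nodup_finRange _)
  conv_lhs =>
    rw [← List.map_get_finRange v, List.sublists'_map, List.count_eq_countP, List.countP_map,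
      List.countP_eq_length_filter, ← List.toFinset_card_of_nodup (hnodup.filter _),
      List.toFinset_filter]
  simp only [Function.comp_apply, beq_iff_eq]

-- `BEq` is taken by unification: instance search on `List A` and `Finset.sum_list_map_count`
-- produce different ones.
theorem subwordCount_eq_count_sublists' {_ : BEq (List A)} [LawfulBEq (List A)] (v u : List A) :
    subwordCount v u = v.sublists'.count u := by
  rw [count_sublists'_eq_card_filter, subwordCount]
  refine Finset.card_bij (fun φ _ => List.ofFn φ) ?_ (fun φ _ ψ _ h => List.ofFn_injective h) ?_
  · intro φ hφ
    obtain ⟨hmono, hletters⟩ := (Finset.mem_filter.1 hφ).2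
    have hmap : List.ofFn (v.get ∘ φ) = u := by
      rw [show v.get ∘ φ = u.get from (funext hletters).symm, List.ofFn_get]
    have hsorted : (List.ofFn φ).SortedLT := List.sortedLT_ofFn_iff.2 fun i j => hmono i j
    simpa [sublist_finRange_iff, List.map_ofFn, hmap] using hsorted
  · intro l hl
    obtain ⟨hmem, rfl⟩ := Finset.mem_filter.1 hl
    have hsorted : l.SortedLT := by simpa [sublist_finRange_iff] using hmem
    have hlen : (l.map v.get).length = l.length := List.length_map _
    refine ⟨fun i => l.get (i.cast hlen), ?_, ?_⟩
    · simp only [Finset.mem_filter, Finset.mem_univ, true_and]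
      exact ⟨fun i j hij => hsorted.strictMono_get hij, fun i => by simp⟩
    · exact List.ext_get (by simp) fun i _ _ => by simp

theorem subwordCount_nil_right_s6 (u : List A) : subwordCount [] u = if u = [] then 1 else 0 := by
  cases u <;> simp [subwordCount_eq_count_sublists']

theorem subwordCount_cons (b : A) (v u : List A) :
    subwordCount (b :: v) u =
      subwordCount v u + if u.head? = some b then subwordCount v u.tail else 0 := by
  simp only [subwordCount_eq_count_sublists', List.sublists'_cons, List.count_append,
    count_map_cons]

theorem length_le_of_subwordCount_ne_zero {u v : List A} (h : subwordCount v u ≠ 0) :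
    u.length ≤ v.length := by
  rw [subwordCount_eq_count_sublists', ← Nat.pos_iff_ne_zero, List.count_pos_iff,
    List.mem_sublists'] at h
  exact h.length_le

/-- The element `P_x` of `I(A*)`: `P_x(u,v) = x ^ (|v| - |u|) * binom(v,u)`, the candidate for the
`x`-th convolution power of `P`. The truncated subtraction is harmless, since `binom(v,u) = 0`
when `|v| < |u|`. -/
def scaledPW (x : ℚ) (u v : List A) : ℚ := x ^ (v.length - u.length) * subwordCount v u

theorem scaledPW_nil_right (x : ℚ) (u : List A) : scaledPW x u [] = if u = [] then 1 else 0 := by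
  simp [scaledPW, subwordCount_nil_right_s6]

theorem scaledPW_cons_right (x : ℚ) (u : List A) (b : A) (v : List A) :
    scaledPW x u (b :: v) =
      x * scaledPW x u v + if u.head? = some b then scaledPW x u.tail v else 0 := by
  have drop : x ^ (v.length + 1 - u.length) * (subwordCount v u : ℚ) = x * scaledPW x u v := by
    by_cases h : subwordCount v u = 0
    · simp [scaledPW, h]
    · rw [scaledPW, Nat.sub_add_comm (length_le_of_subwordCount_ne_zero h), pow_succ]
      ring
  rw [scaledPW, subwordCount_cons, Nat.cast_add, mul_add, List.length_cons, drop]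
  split_ifs with h
  · obtain ⟨u, rfl⟩ := List.head?_eq_some_iff.1 h
    simp [scaledPW]
  · simp

theorem scaledPW_one : (scaledPW 1 : List A → List A → ℚ) = PW := by
  funext u v
  simp [scaledPW, PW]

theorem scaledPW_zero : (scaledPW 0 : List A → List A → ℚ) = deltaW := by
  funext u v
  induction v generalizing u with
  | nil => exact scaledPW_nil_right 0 u
  | cons b v ih =>
    rw [scaledPW_cons_right, zero_mul, zero_add, ih]
    cases u <;> grind [deltaW]

theorem sum_sublists'_scaledPW (x y : ℚ) (u v : List A) :
    (v.sublists'.map fun z => scaledPW x u z * y ^ (v.length - z.length)).sum =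
      scaledPW (x + y) u v := by
  induction v generalizing u with
  | nil => simp [scaledPW_nil_right]
  | cons b v ih =>
    have keep :
        (v.sublists'.map fun z => scaledPW x u (b :: z) * y ^ (v.length - z.length)).sum =
          x * scaledPW (x + y) u v +
            if u.head? = some b then scaledPW (x + y) u.tail v else 0 := by
      simp only [scaledPW_cons_right, add_mul, List.sum_map_add, mul_assoc,
        List.sum_map_mul_left, ih]
      split_ifs <;> simp [ih]
    rw [sum_map_sublists'_cons, ih, keep, scaledPW_cons_right]
    ring

theorem convW_scaledPW_right {F : List A → List A → ℚ} {u : List A}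
    (hF : ∀ z, subwordCount z u = 0 → F u z = 0) (y : ℚ) (v : List A) :
    convW F (scaledPW y) u v =
      (v.sublists'.map fun z => F u z * y ^ (v.length - z.length)).sum := by
  rw [convW, Finset.sum_filter_of_ne, Finset.sum_list_map_count]
  · refine Finset.sum_congr (by ext; simp) fun z _ => ?_
    rw [scaledPW, nsmul_eq_mul, ← subwordCount_eq_count_sublists']
    ring
  · intro z _ hz
    exact Nat.pos_of_ne_zero fun h => hz (by rw [hF z h, zero_mul])

theorem convW_scaledPW (x y : ℚ) :
    convW (scaledPW x) (scaledPW y) = (scaledPW (x + y) : List A → List A → ℚ) := by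
  funext u v
  rw [convW_scaledPW_right (fun z h => by simp [scaledPW, h]), sum_sublists'_scaledPW]

theorem convPow_PW_apply_general (d : ℕ) (u v : List A) :
    convPowW PW d u v = (d : ℚ) ^ (v.length - u.length) * subwordCount v u := by
  suffices h : convPowW PW d = (scaledPW d : List A → List A → ℚ) from congrFun₂ h u v
  induction d with
  | zero => rw [convPowW, Nat.cast_zero, scaledPW_zero]
  | succ d ih => rw [convPowW, ih, ← scaledPW_one, convW_scaledPW, Nat.cast_succ, add_comm]

end

/-- For every natural number `d` and all words `u ≤ v`,
`P^d(u,v) = d^{|v|−|u|} · binom(v,u)` (with `0^0 = 1`, so that `P^0 = δ`). -/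
theorem convPow_PW_apply {A : Type*} [Fintype A] [DecidableEq A] (d : ℕ) (u v : List A)
    (h : 0 < subwordCount v u) :
    convPowW PW d u v = (d : ℚ) ^ (v.length - u.length) * subwordCount v u :=
  convPow_PW_apply_general d u v
end

section
/- Let S denote the set of all (finite) permutations, partially ordered by pattern containment, and let P be the element of the incidence algebra I(S) over ℚ defined by P(σ,π) = binom(π,σ). For every natural number d and all permutations σ ≤ π, the d-th convolution power of P satisfies P^d(σ,π) = d^{|π|−|σ|} · binom(π,σ) (with the convention 0^0 = 1, so that P^0 = δ). Moreover P is invertible and P^{−1}(σ,π) = (−1)^{|π|−|σ|} · binom(π,σ). -/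
/-- The claimed inverse of `P` in `I(S)`: `P⁻¹(σ,π) = (−1)^{|π|−|σ|} · binom(π,σ)`. -/
def PPinv (σ π : Σ n, Equiv.Perm (Fin n)) : ℚ :=
  (-1 : ℚ) ^ (π.1 - σ.1) * patternCount π σ

/-!
Sending an occurrence of `σ` in `π` to its image identifies the occurrences with the subsets of
positions at which `π` induces the pattern `σ`, and the pattern induced at `S` is the pattern
induced at `S` inside the pattern induced at any `T ⊇ S`.  For rational `x` put
`P^x(σ,π) = x^{|π|−|σ|} · binom(π,σ)`.  Then `(P^x P^y)(σ,π)` sums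
`x^{|T|−|S|} y^{|π|−|T|}` over chains `S ⊆ T` with `S` inducing `σ`; for fixed `S` the sum over `T`
is `(x + y)^{|π|−|S|}` by the binomial theorem, so `P^x P^y = P^{x+y}`.  Together with `P^0 = δ`
and `P^1 = P` this gives both the powers and the inverse of `P`.
-/

section

open Finset

theorem sum_Icc_pow_mul_pow {ι R : Type*} [DecidableEq ι] [CommSemiring R] (x y : R)
    {S U : Finset ι} (hSU : S ⊆ U) :
    ∑ T ∈ Icc S U, x ^ (#T - #S) * y ^ (#U - #T) = (x + y) ^ (#U - #S) := by
  have union_injOn : Set.InjOn (S ∪ ·) ((U \ S).powerset : Set (Finset ι)) := by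
    simpa only [union_comm S] using (disjoint_injOn_union_left S).mono fun A hA =>
      (subset_sdiff.1 (mem_powerset.1 hA)).2.symm
  rw [Icc_eq_image_powerset hSU, sum_image union_injOn, ← card_sdiff_of_subset hSU,
    ← sum_pow_mul_eq_add_pow]
  refine sum_congr rfl fun A hA => ?_
  rw [mem_powerset, subset_sdiff] at hA
  rw [card_union_of_disjoint hA.2.symm, card_sdiff_of_subset hSU, Nat.add_sub_cancel_left,
    Nat.sub_sub]

theorem equiv_eq_of_lt_iff_lt {α β : Type*} [LinearOrder β] [WellFoundedLT β] {e e' : α ≃ β}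
    (h : ∀ i j, e i < e j ↔ e' i < e' j) : e = e' := by
  have symm_trans_le_iff (a b : β) : (e.symm.trans e') a ≤ (e.symm.trans e') b ↔ a ≤ b := by
    simpa using (h (e.symm b) (e.symm a)).symm.not
  let f : β ≃o β := ⟨e.symm.trans e', symm_trans_le_iff _ _⟩
  ext i
  simpa [f] using (DFunLike.congr_fun (Subsingleton.elim f (OrderIso.refl β)) (e i)).symm

variable {π τ σ : Σ n, Equiv.Perm (Fin n)}

/-- `IsOccurrence π σ φ` says that `φ` is an occurrence of the pattern `σ` in `π`; it names the
predicate counted by `patternCount π σ`. -/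
structure IsOccurrence (π σ : Σ n, Equiv.Perm (Fin n)) (φ : Fin σ.1 → Fin π.1) : Prop where
  strictMono : StrictMono φ
  lt_iff_lt : ∀ i j, σ.2 i < σ.2 j ↔ π.2 (φ i) < π.2 (φ j)

open Classical in
theorem patternCount_eq_card_isOccurrence (π σ : Σ n, Equiv.Perm (Fin n)) :
    patternCount π σ = #{φ | IsOccurrence π σ φ} := by
  unfold patternCount
  congr 1
  ext φ
  simp only [mem_filter_univ]
  exact ⟨fun h => ⟨fun i j => h.1 i j, h.2⟩,
    fun h => ⟨fun _ _ hij => h.strictMono hij, h.lt_iff_lt⟩⟩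

namespace IsOccurrence

protected theorem id (π : Σ n, Equiv.Perm (Fin n)) : IsOccurrence π π id :=
  ⟨strictMono_id, fun _ _ => Iff.rfl⟩

theorem comp_iff {ψ : Fin τ.1 → Fin π.1} {φ : Fin σ.1 → Fin τ.1} (hψ : IsOccurrence π τ ψ) :
    IsOccurrence π σ (ψ ∘ φ) ↔ IsOccurrence τ σ φ where
  mp h := ⟨fun _ _ hij => hψ.strictMono.lt_iff_lt.1 (h.strictMono hij),
    fun i j => (h.lt_iff_lt i j).trans (hψ.lt_iff_lt _ _).symm⟩
  mpr h := ⟨hψ.strictMono.comp h.strictMono,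
    fun i j => (h.lt_iff_lt i j).trans (hψ.lt_iff_lt _ _)⟩

theorem eq_of_range_eq {φ : Fin σ.1 → Fin π.1} {ψ : Fin τ.1 → Fin π.1}
    (hφ : IsOccurrence π σ φ) (hψ : IsOccurrence π τ ψ) (h : Set.range φ = Set.range ψ) :
    σ = τ := by
  obtain ⟨k, s⟩ := σ
  obtain ⟨m, t⟩ := τ
  obtain rfl : k = m := by
    simpa [Set.ncard_range_of_injective, hφ.strictMono.injective, hψ.strictMono.injective]
      using congrArg Set.ncard h
  obtain rfl : φ = ψ := (hφ.strictMono.range_inj hψ.strictMono).1 h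
  exact congrArg (Sigma.mk k) <|
    equiv_eq_of_lt_iff_lt fun i j => (hφ.lt_iff_lt i j).trans (hψ.lt_iff_lt i j).symm

end IsOccurrence

/-- The pattern of `π` at the set of positions `S`: the permutation of `{1,…,|S|}`
order-isomorphic to the restriction of `π` to `S`.  The sorting permutation of a sequence lists its
positions by increasing value, so its inverse gives the relative rank of each entry. -/
def inducedPattern (π : Σ n, Equiv.Perm (Fin n)) (S : Finset (Fin π.1)) :
    Σ n, Equiv.Perm (Fin n) :=
  ⟨#S, (Tuple.sort (π.2 ∘ S.orderEmbOfFin rfl)).symm⟩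

theorem exists_isOccurrence_inducedPattern (π : Σ n, Equiv.Perm (Fin n)) (S : Finset (Fin π.1)) :
    ∃ ψ, IsOccurrence π (inducedPattern π S) ψ ∧ Set.range ψ = S := by
  let f : Fin #S → Fin π.1 := π.2 ∘ S.orderEmbOfFin rfl
  have f_injective : Function.Injective f := π.2.injective.comp (S.orderEmbOfFin rfl).injective
  have sorted_strictMono : StrictMono (f ∘ Tuple.sort f) :=
    (Tuple.monotone_sort f).strictMono_of_injective (f_injective.comp (Tuple.sort f).injective)
  have rank_lt_iff_lt (i j : Fin #S) :
      (Tuple.sort f).symm i < (Tuple.sort f).symm j ↔ f i < f j := by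
    simpa using (sorted_strictMono.lt_iff_lt
      (a := (Tuple.sort f).symm i) (b := (Tuple.sort f).symm j)).symm
  exact ⟨S.orderEmbOfFin rfl, ⟨(S.orderEmbOfFin rfl).strictMono, rank_lt_iff_lt⟩,
    S.range_orderEmbOfFin rfl⟩

theorem IsOccurrence.inducedPattern_eq {φ : Fin σ.1 → Fin π.1} (hφ : IsOccurrence π σ φ)
    {S : Finset (Fin π.1)} (hS : Set.range φ = S) : inducedPattern π S = σ := by
  obtain ⟨ψ, hψ, range_ψ⟩ := exists_isOccurrence_inducedPattern π S
  exact hψ.eq_of_range_eq hφ (range_ψ.trans hS.symm)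

theorem inducedPattern_univ (π : Σ n, Equiv.Perm (Fin n)) : inducedPattern π univ = π :=
  (IsOccurrence.id π).inducedPattern_eq (by simp)

theorem patternCount_inducedPattern (π : Σ n, Equiv.Perm (Fin n)) (T : Finset (Fin π.1))
    (σ : Σ n, Equiv.Perm (Fin n)) :
    patternCount (inducedPattern π T) σ = #{S ∈ T.powerset | inducedPattern π S = σ} := by
  classical
  obtain ⟨ψ, hψ, range_ψ⟩ := exists_isOccurrence_inducedPattern π T
  rw [patternCount_eq_card_isOccurrence]
  refine card_bij (fun φ _ => (Set.range (ψ ∘ φ)).toFinset) ?maps_to ?injective ?surjective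
  case maps_to =>
    intro φ hφ
    rw [mem_filter_univ, ← hψ.comp_iff] at hφ
    rw [mem_filter, mem_powerset, Set.toFinset_subset, ← range_ψ]
    exact ⟨Set.range_comp_subset_range φ ψ, hφ.inducedPattern_eq (Set.coe_toFinset _).symm⟩
  case injective =>
    intro φ hφ φ' hφ' h
    rw [mem_filter_univ, ← hψ.comp_iff] at hφ hφ'
    exact hψ.strictMono.injective.comp_left <|
      (hφ.strictMono.range_inj hφ'.strictMono).1 (Set.toFinset_inj.1 h)
  case surjective =>
    intro S hS
    obtain ⟨hST, rfl⟩ := mem_filter.1 hS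
    obtain ⟨χ, hχ, range_χ⟩ := exists_isOccurrence_inducedPattern π S
    have range_subset : Set.range χ ⊆ Set.range ψ := by
      rw [range_χ, range_ψ]
      exact coe_subset.2 (mem_powerset.1 hST)
    obtain ⟨φ, rfl⟩ := Set.range_subset_range_iff_exists_comp.1 range_subset
    exact ⟨φ, (mem_filter_univ φ).2 (hψ.comp_iff.1 hχ), by simp only [range_χ, toFinset_coe]⟩

theorem patternCount_eq_card_inducedPattern (π σ : Σ n, Equiv.Perm (Fin n)) :
    patternCount π σ = #{S | inducedPattern π S = σ} := by
  simpa [inducedPattern_univ] using patternCount_inducedPattern π univ σ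

/-- The rational power `P^x` of `PP`, given by the closed formula
`P^x(σ,π) = x^{|π|−|σ|} · binom(π,σ)`.  The truncation in `|π| − |σ|` is harmless, as
`binom(π,σ) = 0` when `|π| < |σ|`. -/
def ratPowPP (x : ℚ) (σ π : Σ n, Equiv.Perm (Fin n)) : ℚ :=
  x ^ (π.1 - σ.1) * patternCount π σ

theorem ratPowPP_eq_zero (x : ℚ) (h : patternCount π σ = 0) : ratPowPP x σ π = 0 := by
  rw [ratPowPP, h, Nat.cast_zero, mul_zero]

theorem ratPowPP_one : ratPowPP 1 = PP := by
  funext σ π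
  rw [ratPowPP, one_pow, one_mul, PP]

theorem ratPowPP_neg_one : ratPowPP (-1) = PPinv := rfl

theorem ratPowPP_inducedPattern (x : ℚ) (σ π : Σ n, Equiv.Perm (Fin n)) (T : Finset (Fin π.1)) :
    ratPowPP x σ (inducedPattern π T) =
      ∑ S ∈ T.powerset with inducedPattern π S = σ, x ^ (#T - #S) := by
  rw [ratPowPP, patternCount_inducedPattern, mul_comm, ← nsmul_eq_mul, ← sum_const]
  refine sum_congr rfl fun S hS => ?_
  rw [← (mem_filter.1 hS).2]
  rfl

theorem ratPowPP_eq_sum (x : ℚ) (σ π : Σ n, Equiv.Perm (Fin n)) :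
    ratPowPP x σ π = ∑ S with inducedPattern π S = σ, x ^ (π.1 - #S) := by
  simpa [inducedPattern_univ] using ratPowPP_inducedPattern x σ π univ

theorem ratPowPP_zero : ratPowPP 0 = deltaP := by
  funext σ π
  have zero_pow_sub_card (S : Finset (Fin π.1)) :
      (0 : ℚ) ^ (π.1 - #S) = if S = univ then 1 else 0 := by
    have sub_eq_zero_iff : π.1 - #S = 0 ↔ S = univ := by
      rw [← card_eq_iff_eq_univ, Fintype.card_fin, Nat.sub_eq_zero_iff_le]
      exact (card_finset_fin_le S).ge_iff_eq
    simp only [zero_pow_eq, sub_eq_zero_iff]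
  simp only [ratPowPP_eq_sum, zero_pow_sub_card, sum_ite_eq', mem_filter_univ, inducedPattern_univ,
    deltaP, eq_comm]

theorem convP_ratPowPP_right (F : (Σ n, Equiv.Perm (Fin n)) → (Σ n, Equiv.Perm (Fin n)) → ℚ)
    (y : ℚ) (σ π : Σ n, Equiv.Perm (Fin n)) (hF : ∀ τ, patternCount τ σ = 0 → F σ τ = 0) :
    convP F (ratPowPP y) σ π =
      ∑ T : Finset (Fin π.1), F σ (inducedPattern π T) * y ^ (π.1 - #T) := by
  have interval_restriction (τ : Σ n, Equiv.Perm (Fin n)) (hτ : F σ τ * ratPowPP y τ π ≠ 0) :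
      0 < patternCount τ σ ∧ 0 < patternCount π τ := by
    refine ⟨Nat.pos_of_ne_zero fun h => hτ ?_, Nat.pos_of_ne_zero fun h => hτ ?_⟩
    · rw [hF τ h, zero_mul]
    · rw [ratPowPP_eq_zero y h, mul_zero]
  rw [convP, sum_filter_of_ne fun τ _ => interval_restriction τ]
  calc
    ∑ τ ∈ (range (π.1 + 1)).sigma fun m => (univ : Finset (Equiv.Perm (Fin m))),
        F σ τ * ratPowPP y τ π
      = ∑ τ ∈ (range (π.1 + 1)).sigma fun m => (univ : Finset (Equiv.Perm (Fin m))),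
          ∑ T with inducedPattern π T = τ, F σ (inducedPattern π T) * y ^ (π.1 - #T) := by
      refine sum_congr rfl fun τ _ => ?_
      rw [ratPowPP_eq_sum, mul_sum]
      refine sum_congr rfl fun T hT => ?_
      rw [(mem_filter.1 hT).2]
    _ = ∑ T : Finset (Fin π.1), F σ (inducedPattern π T) * y ^ (π.1 - #T) :=
      sum_fiberwise_of_maps_to (fun T _ => by
        simpa [inducedPattern, Nat.lt_succ_iff] using card_finset_fin_le T) _

theorem convP_ratPowPP_ratPowPP (x y : ℚ) :
    convP (ratPowPP x) (ratPowPP y) = ratPowPP (x + y) := by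
  funext σ π
  calc
    convP (ratPowPP x) (ratPowPP y) σ π
      = ∑ T : Finset (Fin π.1), ∑ S ∈ T.powerset with inducedPattern π S = σ,
          x ^ (#T - #S) * y ^ (π.1 - #T) := by
      rw [convP_ratPowPP_right _ y σ π fun _ => ratPowPP_eq_zero x]
      simp only [ratPowPP_inducedPattern, sum_mul]
    _ = ∑ S with inducedPattern π S = σ, ∑ T ∈ Icc S univ,
          x ^ (#T - #S) * y ^ (π.1 - #T) :=
      sum_comm' (by simp [and_comm])
    _ = ∑ S with inducedPattern π S = σ, (x + y) ^ (π.1 - #S) :=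
      sum_congr rfl fun S _ => by simpa using sum_Icc_pow_mul_pow x y S.subset_univ
    _ = ratPowPP (x + y) σ π := (ratPowPP_eq_sum (x + y) σ π).symm

theorem convPowP_PP (d : ℕ) : convPowP PP d = ratPowPP d := by
  induction d with
  | zero => rw [convPowP, Nat.cast_zero, ratPowPP_zero]
  | succ d ih =>
    rw [convPowP, ih, ← ratPowPP_one, convP_ratPowPP_ratPowPP, Nat.cast_succ, add_comm]

end

/-- For every natural number `d` and all permutations `σ ≤ π`,
`P^d(σ,π) = d^{|π|−|σ|} · binom(π,σ)` (with `0^0 = 1`, so `P^0 = δ`);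
moreover `P` is invertible with two-sided inverse
`P⁻¹(σ,π) = (−1)^{|π|−|σ|} · binom(π,σ)`. -/
theorem convPow_PP_apply :
    (∀ d : ℕ, ∀ σ π : Σ n, Equiv.Perm (Fin n), 0 < patternCount π σ →
      convPowP PP d σ π = (d : ℚ) ^ (π.1 - σ.1) * patternCount π σ) ∧
    (∀ σ π : Σ n, Equiv.Perm (Fin n), convP PP PPinv σ π = deltaP σ π) ∧
    (∀ σ π : Σ n, Equiv.Perm (Fin n), convP PPinv PP σ π = deltaP σ π) := by
  refine ⟨fun d σ π _ => ?_, fun σ π => ?_, fun σ π => ?_⟩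
  · rw [convPowP_PP, ratPowPP]
  · rw [← ratPowPP_neg_one, ← ratPowPP_one, convP_ratPowPP_ratPowPP, add_neg_cancel,
      ratPowPP_zero]
  · rw [← ratPowPP_neg_one, ← ratPowPP_one, convP_ratPowPP_ratPowPP, neg_add_cancel,
      ratPowPP_zero]
end

section
/- Let n and k be nonnegative integers, let R ⊆ {0,1,…,k}, and let R^c = {0,1,…,k} \ R. Define binom(n; k, R) as the number of subsets {s₁ < s₂ < … < s_k} of {1,…,n} such that s_{i+1} = s_i + 1 for all i ∈ R, with the conventions s₀ = 0 and s_{k+1} = n + 1. Then binom(n; k, R) = ∑_{ℓ=0}^{n} (−1)^{ℓ−k} · binom(ℓ; k, R^c) · C(n,ℓ), where C(n,ℓ) is the ordinary binomial coefficient. -/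
/-!
The gaps `s_{i+1} - s_i - 1`, `0 ≤ i ≤ k`, turn the sequences counted by `binom(k+m; k, R)` into
the weak compositions of `m` with parts indexed by `R^c`. Hence `binom(k+m; k, R) = multichoose c m`
with `c = |R^c|`, and likewise `binom(k+j; k, R^c) = multichoose r j` with `r = |R| = k + 1 - c`.
As `(-1)^j multichoose r j = choose (-r) j`, the reciprocity is the Chu-Vandermonde identity for
`choose (-r + (k + m)) m = choose (c + m - 1) m = multichoose c m`.
-/

/-- The extension of a strictly increasing sequence `s₁ < … < s_k` in `{1,…,n}` (here given
0-indexed as a map `Fin k → Fin n`) by the conventions `s₀ = 0` and `s_{k+1} = n+1`;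
1-based values. -/
def extSeq {k n : ℕ} (s : Fin k → Fin n) : ℕ → ℕ
  | 0 => 0
  | i + 1 => if h : i < k then (s ⟨i, h⟩ : ℕ) + 1 else n + 1

/-- The generalized binomial coefficient `binom(n; k, R)`: the number of `k`-element subsets
`{s₁ < s₂ < … < s_k}` of `{1,…,n}` such that `s_{i+1} = s_i + 1` for all `i ∈ R`, with the
conventions `s₀ = 0` and `s_{k+1} = n + 1`. -/
def gbinom (n k : ℕ) (R : Finset ℕ) : ℕ :=
  ((Finset.univ : Finset (Fin k → Fin n)).filter
    (fun s => (∀ i j : Fin k, i < j → s i < s j) ∧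
      ∀ i ∈ R, extSeq s (i + 1) = extSeq s i + 1)).card

open Finset

section Gaps

variable {n k m : ℕ}

/-- The number of integers strictly between `s_i` and `s_{i+1}`, for the extended sequence
`s₀ = 0 < s₁ < … < s_k < s_{k+1} = n + 1`. For `i > k` truncated subtraction makes it `0`, so that
the gaps are supported in `{0,…,k}`. -/
def gap (s : Fin k → Fin n) (i : ℕ) : ℕ :=
  extSeq s (i + 1) - extSeq s i - 1

theorem extSeq_succ_of_lt (s : Fin k → Fin n) {i : ℕ} (hi : i < k) :
    extSeq s (i + 1) = s ⟨i, hi⟩ + 1 :=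
  dif_pos hi

theorem extSeq_succ_of_le (s : Fin k → Fin n) {i : ℕ} (hi : k ≤ i) : extSeq s (i + 1) = n + 1 :=
  dif_neg hi.not_gt

theorem extSeq_injective : Function.Injective (extSeq : (Fin k → Fin n) → ℕ → ℕ) := by
  intro s t hst
  ext i
  have hi := congrFun hst (i + 1)
  rwa [extSeq_succ_of_lt s i.isLt, extSeq_succ_of_lt t i.isLt, Nat.add_right_cancel_iff] at hi

theorem extSeq_lt_extSeq_succ {s : Fin k → Fin n} (hs : StrictMono s) {i : ℕ} (hi : i ≤ k) :
    extSeq s i < extSeq s (i + 1) := by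
  cases i with
  | zero =>
    rw [extSeq, extSeq]
    split <;> exact Nat.succ_pos _
  | succ i =>
    rw [extSeq_succ_of_lt s hi]
    rcases hi.lt_or_eq with hlt | heq
    · rw [extSeq_succ_of_lt s hlt]
      exact Nat.succ_lt_succ (hs (Fin.mk_lt_mk.2 i.lt_succ_self))
    · rw [extSeq_succ_of_le s heq.ge]
      exact Nat.succ_lt_succ (s _).isLt

theorem gap_eq_zero_of_lt (s : Fin k → Fin n) {i : ℕ} (hi : k < i) : gap s i = 0 := by
  obtain ⟨i, rfl⟩ := Nat.exists_eq_succ_of_ne_zero (Nat.ne_zero_of_lt hi)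
  rw [gap, extSeq_succ_of_le s hi.le, extSeq_succ_of_le s (Nat.le_of_lt_succ hi), Nat.sub_self]

theorem extSeq_succ_eq_add_gap {s : Fin k → Fin n} (hs : StrictMono s) {i : ℕ} (hi : i ≤ k) :
    extSeq s (i + 1) = extSeq s i + 1 + gap s i := by
  have := extSeq_lt_extSeq_succ hs hi
  rw [gap]
  omega

theorem gap_eq_zero_iff {s : Fin k → Fin n} (hs : StrictMono s) {i : ℕ} (hi : i ≤ k) :
    gap s i = 0 ↔ extSeq s (i + 1) = extSeq s i + 1 := by
  rw [extSeq_succ_eq_add_gap hs hi, Nat.add_eq_left]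

theorem extSeq_eq_add_sum_gap {s : Fin k → Fin n} (hs : StrictMono s) {i : ℕ} (hi : i ≤ k + 1) :
    extSeq s i = i + ∑ j ∈ range i, gap s j := by
  induction i with
  | zero => rfl
  | succ i ih =>
    rw [extSeq_succ_eq_add_gap hs (Nat.le_of_succ_le_succ hi), ih (Nat.le_of_succ_le hi),
      sum_range_succ]
    ring

theorem injOn_gap : Set.InjOn (gap : (Fin k → Fin n) → ℕ → ℕ) {s | StrictMono s} := by
  intro s hs t ht hst
  apply extSeq_injective
  funext i
  rcases le_or_gt i (k + 1) with hi | hi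
  · rw [extSeq_eq_add_sum_gap hs hi, extSeq_eq_add_sum_gap ht hi, hst]
  · obtain ⟨i, rfl⟩ := Nat.exists_eq_succ_of_ne_zero (Nat.ne_zero_of_lt hi)
    rw [extSeq_succ_of_le s (by omega), extSeq_succ_of_le t (by omega)]

theorem gap_mem_piAntidiag {s : Fin k → Fin (k + m)} (hs : StrictMono s) :
    gap s ∈ piAntidiag (range (k + 1)) m := by
  refine mem_piAntidiag.2 ⟨?_, fun i hi ↦ ?_⟩
  · have htotal := extSeq_eq_add_sum_gap hs le_rfl
    rw [extSeq_succ_of_le s le_rfl] at htotal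
    change ∑ i ∈ range (k + 1), gap s i = m
    omega
  · contrapose! hi
    exact gap_eq_zero_of_lt s (by simpa using hi)

theorem exists_strictMono_gap_eq {g : ℕ → ℕ} (hg : g ∈ piAntidiag (range (k + 1)) m) :
    ∃ s : Fin k → Fin (k + m), StrictMono s ∧ gap s = g := by
  obtain ⟨hsum, hsupp⟩ := mem_piAntidiag.1 hg
  have hmono : Monotone fun i ↦ ∑ j ∈ range i, g j := (sum_mono_set g).comp range_mono
  have hbound (i : Fin k) : i + ∑ j ∈ range (i + 1), g j < k + m :=
    add_lt_add_of_lt_of_le i.isLt (hsum ▸ hmono (by omega))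
  let s (i : Fin k) : Fin (k + m) := ⟨i + ∑ j ∈ range (i + 1), g j, hbound i⟩
  have hs : StrictMono s := fun i j hij ↦
    Fin.mk_lt_mk.2 (add_lt_add_of_lt_of_le hij (hmono (by omega)))
  have hext {i : ℕ} (hi : i ≤ k + 1) : extSeq s i = i + ∑ j ∈ range i, g j := by
    cases i with
    | zero => rfl
    | succ i =>
      rcases (Nat.le_of_succ_le_succ hi).lt_or_eq with hlt | rfl
      · rw [extSeq_succ_of_lt s hlt, Nat.add_right_comm]
      · rw [extSeq_succ_of_le s le_rfl, hsum, Nat.add_right_comm]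
  refine ⟨s, hs, funext fun i ↦ ?_⟩
  rcases le_or_gt i k with hi | hi
  · rw [gap, hext (by omega), hext (by omega), sum_range_succ]
    omega
  · rw [gap_eq_zero_of_lt s hi, eq_comm]
    by_contra hne
    exact hi.not_ge (mem_range_succ_iff.1 (hsupp i hne))

end Gaps

theorem mem_piAntidiag_sdiff {ι μ : Type*} [DecidableEq ι] [AddCommMonoid μ] [HasAntidiagonal μ]
    [DecidableEq μ] {s t : Finset ι} {m : μ} {f : ι → μ} :
    f ∈ piAntidiag (s \ t) m ↔ f ∈ piAntidiag s m ∧ ∀ i ∈ t, f i = 0 := by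
  have hsum (hf : ∀ i ∈ t, f i = 0) : ∑ i ∈ s \ t, f i = ∑ i ∈ s, f i :=
    sum_subset sdiff_subset fun i his hi ↦ hf i (by simpa [his] using hi)
  simp only [mem_piAntidiag, mem_sdiff]
  constructor
  · rintro ⟨hm, hsupp⟩
    have hf (i : ι) (hi : i ∈ t) : f i = 0 := by
      by_contra hne
      exact (hsupp i hne).2 hi
    exact ⟨⟨hsum hf ▸ hm, fun i hi ↦ (hsupp i hi).1⟩, hf⟩
  · rintro ⟨⟨hm, hsupp⟩, hf⟩
    exact ⟨(hsum hf).trans hm, fun i hi ↦ ⟨hsupp i hi, fun hit ↦ hi (hf i hit)⟩⟩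

theorem card_piAntidiag_nat {ι : Type*} [DecidableEq ι] (s : Finset ι) (m : ℕ) :
    #(piAntidiag s m) = Nat.multichoose #s m := by
  rw [← card_finsuppAntidiag_nat_eq_multichoose, finsuppAntidiag, card_map, card_attach]

theorem gbinom_eq_zero_of_lt {n k : ℕ} (h : n < k) (R : Finset ℕ) : gbinom n k R = 0 := by
  refine card_eq_zero.2 (filter_eq_empty_iff.2 ?_)
  rintro s - ⟨hs, -⟩
  have hs : StrictMono s := hs
  exact h.not_ge (by simpa using Fintype.card_le_of_injective s hs.injective)

theorem gbinom_add_eq_multichoose {k : ℕ} {R : Finset ℕ} (hR : R ⊆ range (k + 1)) (m : ℕ) :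
    gbinom (k + m) k R = Nat.multichoose #(range (k + 1) \ R) m := by
  have hgap {s : Fin k → Fin (k + m)} (hs : StrictMono s) :
      gap s ∈ piAntidiag (range (k + 1) \ R) m ↔ ∀ i ∈ R, extSeq s (i + 1) = extSeq s i + 1 := by
    rw [mem_piAntidiag_sdiff, and_iff_right (gap_mem_piAntidiag hs)]
    exact forall₂_congr fun i hi ↦ gap_eq_zero_iff hs (mem_range_succ_iff.1 (hR hi))
  rw [← card_piAntidiag_nat]
  refine card_nbij gap ?_ ?_ ?_
  · intro s hs
    obtain ⟨hmono, hsR⟩ := (mem_filter.1 hs).2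
    exact (hgap hmono).2 hsR
  · exact injOn_gap.mono fun s hs ↦ (mem_filter.1 hs).2.1
  · intro g hg
    obtain ⟨s, hs, rfl⟩ := exists_strictMono_gap_eq (mem_piAntidiag_sdiff.1 hg).1
    exact ⟨s, mem_filter.2 ⟨mem_univ s, hs, (hgap hs).1 hg⟩, rfl⟩

section ChuVandermonde

variable {S : Type*}

theorem ring_multichoose_natCast [Ring S] [BinomialRing S] (c m : ℕ) :
    Ring.multichoose (c : S) m = Nat.multichoose c m := by
  have hint : Ring.multichoose (c : ℤ) m = Nat.multichoose c m := by
    rw [Nat.multichoose_eq]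
    rfl
  simpa [hint] using (Ring.map_multichoose (Int.castRingHom S) (c : ℤ) m).symm

variable [CommRing S] [BinomialRing S]

theorem ring_multichoose_eq_sum (c r : S) (m : ℕ) :
    Ring.multichoose c m = ∑ ij ∈ antidiagonal m,
      (-1) ^ ij.1 * Ring.multichoose r ij.1 * Ring.choose (c + r + m - 1) ij.2 := by
  calc Ring.multichoose c m = Ring.choose (-r + (c + r + m - 1)) m := by
        rw [Ring.multichoose_eq]
        ring_nf
    _ = ∑ ij ∈ antidiagonal m, Ring.choose (-r) ij.1 * Ring.choose (c + r + m - 1) ij.2 :=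
        Ring.add_choose_eq m (Commute.all _ _)
    _ = _ := by
        refine sum_congr rfl fun ij _ ↦ ?_
        rw [Ring.choose_neg', Units.smul_def, Int.coe_negOnePow_natCast, zsmul_eq_mul,
          Int.cast_pow, Int.cast_neg, Int.cast_one]

theorem multichoose_eq_sum_range {c r k : ℕ} (h : c + r = k + 1) (m : ℕ) :
    (Nat.multichoose c m : S) =
      ∑ j ∈ range (m + 1), (-1 : S) ^ j * Nat.multichoose r j * (k + m).choose (k + j) := by
  have htop : (c + r + m - 1 : S) = (k + m : ℕ) := by
    rw [← Nat.cast_add c r, h]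
    push_cast
    ring
  rw [← ring_multichoose_natCast, ring_multichoose_eq_sum (c : S) r m, htop,
    Nat.sum_antidiagonal_eq_sum_range_succ_mk]
  refine sum_congr rfl fun j hj ↦ ?_
  have hjm : j ≤ m := mem_range_succ_iff.1 hj
  rw [ring_multichoose_natCast, Ring.choose_natCast,
    Nat.choose_symm_of_eq_add (a := m - j) (b := k + j) (by omega)]

end ChuVandermonde

/-- For `R ⊆ {0,1,…,k}` and `R^c = {0,1,…,k} \ R`,
`binom(n; k, R) = ∑_{ℓ=0}^{n} (−1)^{ℓ−k} · binom(ℓ; k, R^c) · C(n,ℓ)`. -/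
theorem gbinom_reciprocity (n k : ℕ) (R : Finset ℕ) (hR : R ⊆ Finset.range (k + 1)) :
    (gbinom n k R : ℚ) =
      ∑ ℓ ∈ Finset.range (n + 1),
        (-1 : ℚ) ^ (ℓ - k) * gbinom ℓ k (Finset.range (k + 1) \ R) * n.choose ℓ := by
  have hterm (ℓ : ℕ) (hℓ : ℓ < k) :
      (-1 : ℚ) ^ (ℓ - k) * gbinom ℓ k (range (k + 1) \ R) * n.choose ℓ = 0 := by
    rw [gbinom_eq_zero_of_lt hℓ, Nat.cast_zero, mul_zero, zero_mul]
  rcases lt_or_ge n k with hnk | hkn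
  · rw [gbinom_eq_zero_of_lt hnk, Nat.cast_zero,
      sum_eq_zero fun ℓ hℓ ↦ hterm ℓ ((mem_range_succ_iff.1 hℓ).trans_lt hnk)]
  · obtain ⟨m, rfl⟩ := Nat.exists_eq_add_of_le hkn
    have hcard : #(range (k + 1) \ R) + #R = k + 1 := by
      rw [card_sdiff_add_card_eq_card hR, card_range]
    rw [gbinom_add_eq_multichoose hR, multichoose_eq_sum_range hcard, add_assoc k m 1,
      sum_range_add _ k (m + 1), sum_eq_zero fun ℓ hℓ ↦ hterm ℓ (mem_range.1 hℓ), zero_add]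
    refine sum_congr rfl fun j _ ↦ ?_
    rw [gbinom_add_eq_multichoose sdiff_subset, Finset.sdiff_sdiff_eq_self hR,
      Nat.add_sub_cancel_left]
end

section
/- In the incidence algebra I(ℕ) of the natural numbers with their usual order, over ℚ, define H(i,j) = j if j = i + 1 and 0 otherwise, and P(i,j) = C(j,i), the ordinary binomial coefficient. Then P = e^H entrywise; that is, for all natural numbers i ≤ j, ∑_{ℓ=0}^{j−i} (1/ℓ!) · H^ℓ(i,j) = C(j,i), where H^0 = δ is the identity of the incidence algebra. -/
/-- The identity `δ` of the incidence algebra `I(ℕ)` over `ℚ`. -/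
def deltaN (i j : ℕ) : ℚ := if i = j then 1 else 0

/-- Convolution in the incidence algebra `I(ℕ)` of the naturals with their usual order:
`(FG)(i,j) = ∑_{i ≤ z ≤ j} F(i,z)·G(z,j)`. -/
def convN (F G : ℕ → ℕ → ℚ) (i j : ℕ) : ℚ := ∑ z ∈ Finset.Icc i j, F i z * G z j

/-- Convolution powers, with `F ^ 0 = δ`. -/
def convPowN (F : ℕ → ℕ → ℚ) : ℕ → ℕ → ℕ → ℚ
  | 0 => deltaN
  | ℓ + 1 => convN F (convPowN F ℓ)

/-- The element `H` of `I(ℕ)`: `H(i,j) = j` if `j = i + 1`, else `0`. -/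
def HN (i j : ℕ) : ℚ := if j = i + 1 then (j : ℚ) else 0

/-! `H` is a weighted shift, so `H^ℓ` lives on the `ℓ`-th superdiagonal and only the term
`ℓ = j - i` of the exponential series contributes at `(i,j)`. Its value is the product of the
weights `(i + 1) ⋯ j` met along the single path from `i` to `j`, divided by `(j - i)!`. -/

/-- The exponential `e^F = ∑ F^ℓ / ℓ!` of an element `F` of `I(ℕ)` vanishing on the diagonal. For
such an `F` and `i ≤ j`, the power `F^ℓ(i,j)` is zero as soon as `ℓ > j - i`, so the series is cut
off there. -/
def expN (F : ℕ → ℕ → ℚ) (i j : ℕ) : ℚ :=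
  ∑ ℓ ∈ Finset.range (j - i + 1), (1 / (Nat.factorial ℓ : ℚ)) * convPowN F ℓ i j

/-- The element of `I(ℕ)` supported on the pairs `(i, i + 1)`, with value `w i` there: a weighted
shift, of which `H` is the case `w i = i + 1`. The weight is indexed by the left endpoint. -/
def superdiagonalN (w : ℕ → ℚ) (i j : ℕ) : ℚ := if j = i + 1 then w i else 0

theorem convN_superdiagonalN (w : ℕ → ℚ) (G : ℕ → ℕ → ℚ) (i j : ℕ) :
    convN (superdiagonalN w) G i j = if i + 1 ≤ j then w i * G (i + 1) j else 0 := by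
  simp [convN, superdiagonalN]

theorem convPowN_superdiagonalN (w : ℕ → ℚ) (ℓ i j : ℕ) :
    convPowN (superdiagonalN w) ℓ i j =
      if j = i + ℓ then ∏ k ∈ Finset.range ℓ, w (i + k) else 0 := by
  induction ℓ generalizing i with
  | zero => simp [convPowN, deltaN, eq_comm]
  | succ ℓ ih =>
    have prod_shift : ∏ k ∈ Finset.range (ℓ + 1), w (i + k) =
        w i * ∏ k ∈ Finset.range ℓ, w (i + 1 + k) := by
      simp only [Finset.prod_range_succ', add_zero, mul_comm, add_assoc, add_comm 1]
    rw [convPowN, convN_superdiagonalN, ih, prod_shift]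
    split_ifs <;> first | rfl | exact mul_zero _ | omega

theorem expN_superdiagonalN_add (w : ℕ → ℚ) (i n : ℕ) :
    expN (superdiagonalN w) i (i + n) =
      (∏ k ∈ Finset.range n, w (i + k)) / (Nat.factorial n : ℚ) := by
  simp only [expN, convPowN_superdiagonalN, Nat.add_left_cancel_iff, add_tsub_cancel_left, mul_ite,
    mul_zero, Finset.sum_ite_eq, Finset.mem_range, Nat.lt_succ_self, if_true,
    one_div_mul_eq_div]

theorem HN_eq_superdiagonalN : HN = superdiagonalN fun i ↦ ((i + 1 : ℕ) : ℚ) := by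
  ext i j
  exact ite_congr rfl (congrArg _) fun _ ↦ rfl

theorem prod_range_add_succ_eq_factorial_mul_choose (i n : ℕ) :
    ∏ k ∈ Finset.range n, (i + k + 1) = Nat.factorial n * (i + n).choose i := by
  rw [Nat.choose_symm_add, ← Nat.ascFactorial_eq_factorial_mul_choose,
    Nat.ascFactorial_eq_prod_range]
  simp only [add_right_comm]

/-- Call–Velleman: in `I(ℕ)`, `P = e^H`, i.e. for all `i ≤ j`,
`∑_{ℓ=0}^{j−i} (1/ℓ!) · H^ℓ(i,j) = C(j,i)`. -/
theorem pascal_eq_exp_HN (i j : ℕ) (h : i ≤ j) :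
    ∑ ℓ ∈ Finset.range (j - i + 1), (1 / (Nat.factorial ℓ : ℚ)) * convPowN HN ℓ i j
      = j.choose i := by
  change expN HN i j = j.choose i
  obtain ⟨n, rfl⟩ := Nat.exists_eq_add_of_le h
  calc expN HN i (i + n)
      = (∏ k ∈ Finset.range n, ((i + k + 1 : ℕ) : ℚ)) / Nat.factorial n := by
        rw [HN_eq_superdiagonalN, expN_superdiagonalN_add]
    _ = Nat.factorial n * (i + n).choose i / Nat.factorial n := by
        rw [← Nat.cast_prod, prod_range_add_succ_eq_factorial_mul_choose, Nat.cast_mul]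
    _ = (i + n).choose i :=
        mul_div_cancel_left₀ _ (Nat.cast_ne_zero.mpr n.factorial_ne_zero)
end

section
/- Let A = {0,1} and define the parity function xor : A* → {0,1} by xor(w) = 1 if w has an odd number of ones and xor(w) = 0 otherwise. Then for every word w ∈ A*, xor(w) = ∑_{k=1}^{|w|} (−2)^{k−1} · binom(w, 1^k), where 1^k denotes the word consisting of k ones. -/
/-! Strictly increasing maps are determined by their images, so an occurrence of `1^k` in `w` is a
choice of `k` positions among the `m` ones of `w`, and `binom(w, 1^k) = binom(m, k)`. Comparing
coefficients in `((x + 1)^m - 1) / x = ∑_{i < m} (x + 1)^i` gives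
`∑_{k ≥ 1} binom(m, k) x^(k-1) = ∑_{i < m} (x + 1)^i`; at `x = -2` the right-hand side is the
alternating sum `1 - 1 + 1 - ⋯` with `m` terms, which is the parity of `m`. -/

open Finset

theorem card_filter_strictMono_forall_mem {α : Type*} [LinearOrder α] [Fintype α]
    (s : Finset α) (k : ℕ) :
    #{φ : Fin k → α | StrictMono φ ∧ ∀ i, φ i ∈ s} = (#s).choose k := by
  rw [← card_powersetCard]
  refine card_bij' (fun φ _ ↦ univ.image φ)
    (fun t ht ↦ t.orderEmbOfFin (mem_powersetCard.mp ht).2) ?image_mem ?enum_mem ?enum_image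
    ?image_enum
  case image_mem =>
    intro φ hφ
    obtain ⟨hmono, hmem⟩ := (mem_filter_univ φ).mp hφ
    refine mem_powersetCard.mpr ⟨image_subset_iff.mpr fun i _ ↦ hmem i, ?_⟩
    rw [card_image_of_injective _ hmono.injective, card_fin]
  case enum_mem =>
    intro t ht
    have hts := (mem_powersetCard.mp ht).1
    exact (mem_filter_univ _).mpr
      ⟨OrderEmbedding.strictMono _, fun i ↦ hts (orderEmbOfFin_mem t _ i)⟩
  case enum_image =>
    intro φ hφ
    have hmono := ((mem_filter_univ φ).mp hφ).1
    exact (orderEmbOfFin_unique _ (fun i ↦ mem_image_of_mem φ (mem_univ i)) hmono).symm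
  case image_enum =>
    exact fun t _ ↦ image_orderEmbOfFin_univ t _

section Subword

variable {A : Type*} [DecidableEq A]

theorem card_filter_get_eq_count (w : List A) (a : A) :
    #{i : Fin w.length | w.get i = a} = w.count a :=
  Fin.card_filter_univ_eq_vector_get_eq_count a ⟨w, rfl⟩

theorem subwordCount_replicate (w : List A) (a : A) (k : ℕ) :
    subwordCount w (List.replicate k a) = (w.count a).choose k := by
  calc subwordCount w (List.replicate k a)
      = #{φ : Fin (List.replicate k a).length → Fin w.length |
          StrictMono φ ∧ ∀ i, φ i ∈ ({j | w.get j = a} : Finset (Fin w.length))} := by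
        simp [subwordCount, StrictMono, eq_comm]
    _ = (w.count a).choose k := by
        rw [card_filter_strictMono_forall_mem, card_filter_get_eq_count, List.length_replicate]

end Subword

section BinomialSum

variable {R : Type*} [Semiring R]

theorem sum_range_pow_mul_choose_succ (x : R) (n : ℕ) :
    ∑ k ∈ range n, x ^ k * (n.choose (k + 1) : R) = ∑ i ∈ range n, (x + 1) ^ i := by
  simpa [Polynomial.aeval_comp, Nat.cast_comm] using
    (congrArg (Polynomial.aeval x) (Polynomial.geom_sum_X_comp_X_add_one_eq_sum (R := ℕ) n)).symm

theorem sum_Icc_pow_pred_mul_choose (x : R) {m n : ℕ} (hmn : m ≤ n) :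
    ∑ k ∈ Icc 1 n, x ^ (k - 1) * (m.choose k : R) = ∑ i ∈ range m, (x + 1) ^ i := by
  calc ∑ k ∈ Icc 1 n, x ^ (k - 1) * (m.choose k : R)
      = ∑ k ∈ Icc 1 m, x ^ (k - 1) * (m.choose k : R) := by
        refine (sum_subset (Icc_subset_Icc_right hmn) fun k hkn hkm ↦ ?_).symm
        have hmk : m < k := by grind
        rw [Nat.choose_eq_zero_of_lt hmk, Nat.cast_zero, mul_zero]
    _ = ∑ k ∈ range m, x ^ k * (m.choose (k + 1) : R) := by
        rw [← Ico_add_one_right_eq_Icc, sum_Ico_eq_sum_range]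
        simp [add_comm 1]
    _ = ∑ i ∈ range m, (x + 1) ^ i := sum_range_pow_mul_choose_succ x m

end BinomialSum

theorem xor_mahler_expansion_general {A R : Type*} [DecidableEq A] [Ring R] (a : A) (w : List A) :
    (if w.count a % 2 = 1 then 1 else 0 : R) =
      ∑ k ∈ Icc 1 w.length, (-2 : R) ^ (k - 1) * subwordCount w (List.replicate k a) := by
  calc (if w.count a % 2 = 1 then 1 else 0 : R)
      = ∑ i ∈ range (w.count a), (-1 : R) ^ i := by
        simp only [neg_one_geom_sum, ← Nat.not_even_iff, ite_not]
    _ = ∑ i ∈ range (w.count a), (-2 + 1 : R) ^ i := by norm_num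
    _ = ∑ k ∈ Icc 1 w.length, (-2 : R) ^ (k - 1) * ((w.count a).choose k : R) :=
        (sum_Icc_pow_pred_mul_choose (-2) List.count_le_length).symm
    _ = ∑ k ∈ Icc 1 w.length, (-2 : R) ^ (k - 1) * subwordCount w (List.replicate k a) := by
        simp only [subwordCount_replicate]

/-- Parity: for every word `w` over `{0,1}` (modelled as `Bool`, with `1 = true`),
`xor(w) = ∑_{k=1}^{|w|} (−2)^{k−1} · binom(w, 1^k)`, where `xor(w)` is `1` if `w` has an
odd number of ones and `0` otherwise. -/
theorem xor_mahler_expansion (w : List Bool) :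
    (if w.count true % 2 = 1 then 1 else 0 : ℚ) =
      ∑ k ∈ Finset.Icc 1 w.length,
        (-2 : ℚ) ^ (k - 1) * subwordCount w (List.replicate k true) := by
  exact xor_mahler_expansion_general true w
end
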